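/- arXiv:1304.2580 — 4 statements merged into one kernel-verified Lean document; each statement's English description precedes it below -/
import Mathlib

section
/- Let n ≥ 2, let L be an n×n real symmetric positive semidefinite matrix satisfying L·𝟏 = 0 (where 𝟏 is the all-ones vector in ℝⁿ), with eigenvalues listed in increasing order 0 = λ₁ ≤ λ₂ ≤ … ≤ λₙ, and let δ ∈ ℝ. If max{|1 − δλ₂|, |1 − δλₙ|} < 1, then for every initial vector x₀ ∈ ℝⁿ the iterates x(t) = (I − δL)ᵗ x₀ converge (in norm) as t → ∞ to μ𝟏, where μ = (1/n)·𝟏ᵀx₀ is the average of the entries of x₀. -/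
open Matrix Filter

/-!
The matrix `I - δL` fixes `𝟏`, and it preserves the sum of the entries because `𝟏ᵀL = 0`. Hence
subtracting the average from `x₀` leaves a vector `y` with entry sum zero, and the iterates of
`x₀` and of `y` differ by the constant vector `μ𝟏`. The step size puts all eigenvalues of `I - δL`
except one strictly inside the unit disc. A preserved functional vanishes on every eigenvector whose
eigenvalue is not `1`; the entry sum is not identically zero, so it does not vanish on the
exceptional eigenvector, and `y` has no component along it. All other components decay
geometrically.
-/

section InvariantFunctional

variable {R M ι : Type*} [CommRing R] [NoZeroDivisors R] [AddCommGroup M] [Module R M]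
  {φ : Module.Dual R M}

theorem apply_eq_zero_of_comp_eq_self {T : Module.End R M} (hφ : φ ∘ₗ T = φ) {μ : R}
    (hμ : μ ≠ 1) {x : M} (hx : T x = μ • x) : φ x = 0 := by
  have hfix : φ x = μ * φ x := by
    simpa [hx] using (LinearMap.congr_fun hφ x).symm
  by_contra hne
  exact hμ ((right_eq_mul₀ hne).mp hfix)

theorem repr_eq_zero_of_apply_eq_zero (b : Module.Basis ι R M) (hφ : φ ≠ 0) {o : ι}
    (hb : ∀ i ≠ o, φ (b i) = 0) {x : M} (hx : φ x = 0) : b.repr x o = 0 := by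
  have hcoord : φ = φ (b o) • b.coord o := b.ext fun i => by
    obtain rfl | hi := eq_or_ne i o
    · simp
    · simp [hb i hi, hi]
  have hbo : φ (b o) ≠ 0 := fun h => hφ (by rw [hcoord, h, zero_smul])
  have hmul : φ (b o) * b.repr x o = 0 := (LinearMap.congr_fun hcoord x).symm.trans hx
  exact (mul_eq_zero.mp hmul).resolve_left hbo

end InvariantFunctional

section Eigenbasis

variable {𝕜 E ι : Type*} [NormedField 𝕜] [AddCommGroup E] [Module 𝕜 E] [TopologicalSpace E]
  [ContinuousAdd E] [ContinuousSMul 𝕜 E] (b : Module.Basis ι 𝕜 E) {T : Module.End 𝕜 E} {μ : ι → 𝕜}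

theorem tendsto_pow_apply_zero_of_eigenbasis (hT : ∀ i, T.HasEigenvector (μ i) (b i)) {x : E}
    (hx : ∀ i, b.repr x i = 0 ∨ ‖μ i‖ < 1) :
    Tendsto (fun t : ℕ => (T ^ t) x) atTop (nhds 0) := by
  have hexpand (t : ℕ) : (T ^ t) x = ∑ i ∈ (b.repr x).support, (b.repr x i * μ i ^ t) • b i := by
    conv_lhs => rw [← b.linearCombination_repr x, Finsupp.linearCombination_apply, Finsupp.sum,
      map_sum]
    simp only [map_smul, (hT _).pow_apply, smul_smul]
  have hcoeff (i : ι) : Tendsto (fun t : ℕ => b.repr x i * μ i ^ t) atTop (nhds 0) := by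
    obtain hzero | hlt := hx i
    · simp [hzero]
    · simpa using (tendsto_pow_atTop_nhds_zero_of_norm_lt_one hlt).const_mul (b.repr x i)
  simpa [hexpand] using tendsto_finsetSum (b.repr x).support fun i _ => (hcoeff i).smul_const (b i)

theorem tendsto_pow_apply_of_eigenbasis (hT : ∀ i, T.HasEigenvector (μ i) (b i)) {o : ι}
    (hμ : ∀ i ≠ o, ‖μ i‖ < 1) {φ : Module.Dual 𝕜 E} (hφ : φ ∘ₗ T = φ) {u : E} (hu : T u = u)
    (hφu : φ u ≠ 0) (x : E) :
    Tendsto (fun t : ℕ => (T ^ t) x) atTop (nhds ((φ x / φ u) • u)) := by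
  set y := x - (φ x / φ u) • u with hy
  have hφy : φ y = 0 := by simp [hy, hφu]
  have hφb (i : ι) (hi : i ≠ o) : φ (b i) = 0 :=
    apply_eq_zero_of_comp_eq_self hφ (fun h => by simpa [h] using hμ i hi) (hT i).apply_eq_smul
  have hyo : b.repr y o = 0 :=
    repr_eq_zero_of_apply_eq_zero b (fun h => hφu (by simp [h])) hφb hφy
  have hlim : Tendsto (fun t : ℕ => (T ^ t) y) atTop (nhds 0) :=
    tendsto_pow_apply_zero_of_eigenbasis b hT fun i => by
      obtain rfl | hi := eq_or_ne i o
      · exact .inl hyo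
      · exact .inr (hμ i hi)
  have hfix (t : ℕ) : (T ^ t) u = u := by
    rw [Module.End.pow_apply]
    exact Function.iterate_fixed hu t
  have hsplit (t : ℕ) : (T ^ t) x = (T ^ t) y + (φ x / φ u) • u := by
    simp [hy, hfix]
  simpa [hsplit] using hlim.add_const ((φ x / φ u) • u)

end Eigenbasis

theorem linearIndependent_of_dotProduct_eq_ite {R ι κ : Type*} [CommRing R] [DecidableEq ι]
    [Fintype κ] {v : ι → κ → R} (hv : ∀ i j, v i ⬝ᵥ v j = if i = j then 1 else 0) :
    LinearIndependent R v := by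
  refine linearIndependent_iff'.mpr fun s g hg i hi => ?_
  simpa [dotProduct_sum, hv, hi] using congrArg (v i ⬝ᵥ ·) hg

theorem abs_one_sub_mul_le_max {R : Type*} [CommRing R] [LinearOrder R] [IsStrictOrderedRing R]
    {a b c : R} (hab : a ≤ b) (hbc : b ≤ c) (δ : R) :
    |1 - δ * b| ≤ max |1 - δ * a| |1 - δ * c| := by
  obtain hδ | hδ := le_total 0 δ
  · rw [max_comm]
    exact abs_le_max_abs_abs (sub_le_sub_left (mul_le_mul_of_nonneg_left hbc hδ) 1)
      (sub_le_sub_left (mul_le_mul_of_nonneg_left hab hδ) 1)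
  · exact abs_le_max_abs_abs (sub_le_sub_left (mul_le_mul_of_nonpos_left hab hδ) 1)
      (sub_le_sub_left (mul_le_mul_of_nonpos_left hbc hδ) 1)

theorem tendsto_sqrt_sum_sq_sub {α ι : Type*} [Fintype ι] {l : Filter α} {f : α → ι → ℝ}
    {a : ι → ℝ} (hf : Tendsto f l (nhds a)) :
    Tendsto (fun t => Real.sqrt (∑ i, (f t i - a i) ^ 2)) l (nhds 0) := by
  have hcont : Continuous fun x : ι → ℝ => Real.sqrt (∑ i, (x i - a i) ^ 2) := by fun_prop
  exact (hcont.tendsto' a 0 (by simp)).comp hf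

theorem consensus_convergence_general {𝕜 ι : Type*} [NormedField 𝕜] [CharZero 𝕜] [Fintype ι]
    [DecidableEq ι] {L : Matrix ι ι 𝕜} (hL1 : L *ᵥ 1 = 0) (h1L : 1 ᵥ* L = 0)
    {lam : ι → 𝕜} {v : ι → ι → 𝕜} (hv : LinearIndependent 𝕜 v)
    (heig : ∀ i, L *ᵥ v i = lam i • v i) {δ : 𝕜} {o : ι} (hs : ∀ i ≠ o, ‖1 - δ * lam i‖ < 1)
    (x₀ : ι → 𝕜) :
    Tendsto (fun t : ℕ => ((1 - δ • L) ^ t) *ᵥ x₀) atTop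
      (nhds fun _ => (∑ j, x₀ j) / Fintype.card ι) := by
  have : Nonempty ι := ⟨o⟩
  let b := basisOfLinearIndependentOfCardEqFinrank hv (by simp)
  let T : Module.End 𝕜 (ι → 𝕜) := toLin' (1 - δ • L)
  have hT_apply (x : ι → 𝕜) : T x = x - δ • L *ᵥ x := by
    rw [toLin'_apply, sub_mulVec, one_mulVec, smul_mulVec]
  let φ : Module.Dual 𝕜 (ι → 𝕜) := ∑ j, LinearMap.proj j
  have hφ_apply (x : ι → 𝕜) : φ x = 1 ⬝ᵥ x := by simp [φ, one_dotProduct]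
  have hT (i : ι) : T.HasEigenvector (1 - δ * lam i) (b i) := by
    refine Module.End.hasEigenvector_iff.mpr ⟨Module.End.mem_eigenspace_iff.mpr ?_, b.ne_zero i⟩
    simp [b, hT_apply, heig, sub_smul, mul_smul]
  have hφ : φ ∘ₗ T = φ := LinearMap.ext fun x => by
    rw [LinearMap.comp_apply, hφ_apply, hφ_apply, hT_apply, dotProduct_sub, dotProduct_smul,
      dotProduct_mulVec, h1L, zero_dotProduct, smul_zero, sub_zero]
  have hu : T 1 = 1 := by simp [hT_apply, hL1]
  have hφu : φ 1 = Fintype.card ι := by simp [φ]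
  have hlim := tendsto_pow_apply_of_eigenbasis b hT hs hφ hu (by simp [hφu]) x₀
  simp only [T, ← toLin'_pow, toLin'_apply, hφu, hφ_apply, one_dotProduct] at hlim
  convert hlim using 2
  ext
  simp

/-- If `L` is a real symmetric positive semidefinite `n × n` matrix with `L 𝟏 = 0`
whose eigenvalues (with multiplicity, in increasing order) are
`0 = λ₁ ≤ λ₂ ≤ … ≤ λₙ`, witnessed by an orthonormal family of eigenvectors `v`,
and `max {|1 - δλ₂|, |1 - δλₙ|} < 1`, then for every initial vector `x₀`, the
iterates `x(t) = (I - δL)^t x₀` converge in (Euclidean) norm to `μ 𝟏`, where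
`μ = (𝟏ᵀ x₀) / n` is the average of the entries of `x₀`. -/
theorem consensus_convergence {n : ℕ} (hn : 2 ≤ n)
    (L : Matrix (Fin n) (Fin n) ℝ)
    (hsym : L.IsSymm) (hpsd : L.PosSemidef)
    (hL1 : L.mulVec (fun _ => (1 : ℝ)) = 0)
    (lam : Fin n → ℝ) (hmono : Monotone lam)
    (hlam1 : lam ⟨0, by omega⟩ = 0)
    (v : Fin n → (Fin n → ℝ))
    (honb : ∀ i j, v i ⬝ᵥ v j = if i = j then (1 : ℝ) else 0)
    (heig : ∀ i, L.mulVec (v i) = lam i • v i)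
    (δ : ℝ)
    (hs : max |1 - δ * lam ⟨1, by omega⟩| |1 - δ * lam ⟨n - 1, by omega⟩| < 1)
    (x₀ : Fin n → ℝ) :
    Tendsto
      (fun t : ℕ =>
        Real.sqrt (∑ i, ((((1 : Matrix (Fin n) (Fin n) ℝ) - δ • L) ^ t).mulVec x₀ i
          - (∑ j, x₀ j) / n) ^ 2))
      atTop (nhds 0) := by
  have hrow : 1 ᵥ* L = 0 := by
    rw [← mulVec_transpose, hsym.eq]
    exact hL1
  have hcontract : ∀ i ≠ (⟨0, by omega⟩ : Fin n), ‖1 - δ * lam i‖ < 1 := fun i hi => by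
    have hi0 : i.val ≠ 0 := fun h => hi (Fin.ext h)
    exact (abs_one_sub_mul_le_max (hmono (Fin.mk_le_of_le_val (by omega)))
      (hmono (Fin.le_def.mpr (Nat.le_sub_one_of_lt i.isLt))) δ).trans_lt hs
  simpa using tendsto_sqrt_sum_sq_sub (consensus_convergence_general hL1 hrow
    (linearIndependent_of_dotProduct_eq_ite honb) heig hcontract x₀)
end

section
/- Let n ≥ 2, let L be an n×n real symmetric positive semidefinite matrix satisfying L·𝟏 = 0, with eigenvalues 0 = λ₁ ≤ λ₂ ≤ … ≤ λₙ, let δ ∈ ℝ, and set s = max{|1 − δλ₂|, |1 − δλₙ|}. Then for every x₀ ∈ ℝⁿ and every t ≥ 0, with μ = (1/n)·𝟏ᵀx₀, one has ‖(I − δL)ᵗ x₀ − μ𝟏‖ ≤ sᵗ ‖x₀ − μ𝟏‖ (Euclidean norm). -/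
open Matrix

/-!
Expanding in an orthonormal eigenbasis `b`, `(1 - δL)ᵗ` multiplies the `i`-th coordinate by
`(1 - δλᵢ)ᵗ`, and `λ ↦ |1 - δλ|` is convex, hence bounded on `[λ₂, λₙ]` by its larger endpoint
value `s`. Only the coordinate along `b₁` could violate this bound. If `λ₂ = 0`, then
`|1 - δλ₁| = |1 - δλ₂| ≤ s` anyway; if `λ₂ > 0`, then the kernel vector `𝟏` is a multiple of
`b₁`, so the deviation from the mean, being orthogonal to `𝟏`, has no component along `b₁`.
-/

open scoped InnerProductSpace
open WithLp

theorem norm_sub_smul_le_max {E : Type*} [SeminormedAddCommGroup E] [NormedSpace ℝ E]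
    (u w : E) {a c x : ℝ} (hx : x ∈ Set.Icc a c) :
    ‖u - x • w‖ ≤ max ‖u - a • w‖ ‖u - c • w‖ := by
  have hconv : ConvexOn ℝ Set.univ (fun r : ℝ ↦ ‖u - r • w‖) := by
    convert! (convexOn_univ_norm (E := E)).comp_affineMap (AffineMap.lineMap (k := ℝ) u (u - w))
      using 2 with r
    simp [AffineMap.lineMap_apply, sub_eq_neg_add]
  exact hconv.le_max_of_mem_Icc trivial trivial hx

theorem one_sub_smul_pow_apply {R M : Type*} [CommRing R] [AddCommGroup M] [Module R M]
    {T : Module.End R M} {r : R} {v : M} (hv : T v = r • v) (δ : R) (t : ℕ) :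
    ((1 - δ • T) ^ t) v = (1 - δ * r) ^ t • v := by
  induction t with
  | zero => simp
  | succ t ih =>
    have hstep : (1 - δ • T) v = (1 - δ * r) • v := by simp [hv, sub_smul, smul_smul]
    rw [pow_succ, Module.End.mul_apply, hstep, map_smul, ih, smul_smul, pow_succ']

section Eigenbasis

variable {𝕜 E ι : Type*} [RCLike 𝕜] [NormedAddCommGroup E] [InnerProductSpace 𝕜 E] [Fintype ι]
  {b : OrthonormalBasis ι 𝕜 E} {T : Module.End 𝕜 E}

theorem inner_map_of_eigenbasis {μ : ι → 𝕜} (hT : ∀ i, T (b i) = μ i • b i) (i : ι) (x : E) :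
    ⟪b i, T x⟫_𝕜 = μ i * ⟪b i, x⟫_𝕜 := by
  classical
  conv_lhs => rw [← b.sum_repr' x]
  simp only [map_sum, map_smul, hT, inner_sum, inner_smul_right, b.inner_eq_ite, mul_ite, mul_one,
    mul_zero, Finset.sum_ite_eq, Finset.mem_univ, if_true]
  exact mul_comm _ _

theorem norm_map_le_of_eigenbasis {μ : ι → 𝕜} (hT : ∀ i, T (b i) = μ i • b i) {s : ℝ}
    (hs : 0 ≤ s) {x : E} (hx : ∀ i, ‖μ i‖ ≤ s ∨ ⟪b i, x⟫_𝕜 = 0) : ‖T x‖ ≤ s * ‖x‖ := by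
  have hcoord (i : ι) : ‖⟪b i, T x⟫_𝕜‖ ≤ s * ‖⟪b i, x⟫_𝕜‖ := by
    rw [inner_map_of_eigenbasis hT, norm_mul]
    rcases hx i with hμ | hzero
    · gcongr
    · simp [hzero]
  refine le_of_sq_le_sq ?_ (by positivity)
  calc ‖T x‖ ^ 2 = ∑ i, ‖⟪b i, T x⟫_𝕜‖ ^ 2 := (b.sum_sq_norm_inner_right _).symm
    _ ≤ ∑ i, (s * ‖⟪b i, x⟫_𝕜‖) ^ 2 := by gcongr with i; exact hcoord i
    _ = (s * ‖x‖) ^ 2 := by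
      simp only [mul_pow, ← Finset.mul_sum, b.sum_sq_norm_inner_right]

theorem inner_eigenvector_smul_eq_of_map_eq_zero {μ : ι → 𝕜} (hT : ∀ i, T (b i) = μ i • b i)
    {i : ι} (hμ : ∀ j ≠ i, μ j ≠ 0) {e : E} (he : T e = 0) : ⟪b i, e⟫_𝕜 • b i = e := by
  have hcoord (j : ι) (hj : j ≠ i) : ⟪b j, e⟫_𝕜 = 0 := by
    simpa [he, hμ j hj] using inner_map_of_eigenbasis hT j e
  calc ⟪b i, e⟫_𝕜 • b i = ∑ j, ⟪b j, e⟫_𝕜 • b j := by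
        symm
        exact Fintype.sum_eq_single i fun j hj ↦ by rw [hcoord j hj, zero_smul]
    _ = e := b.sum_repr' e

theorem inner_eigenvector_eq_zero_of_inner_ker_eq_zero {μ : ι → 𝕜}
    (hT : ∀ i, T (b i) = μ i • b i) {i : ι} (hμ : ∀ j ≠ i, μ j ≠ 0) {e y : E}
    (he₀ : e ≠ 0) (he : T e = 0) (hey : ⟪e, y⟫_𝕜 = 0) : ⟪b i, y⟫_𝕜 = 0 := by
  have hexp := inner_eigenvector_smul_eq_of_map_eq_zero hT hμ he
  have hcoord : ⟪b i, e⟫_𝕜 ≠ 0 := fun h ↦ he₀ (by rw [← hexp, h, zero_smul])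
  rw [← hexp, inner_smul_left] at hey
  exact (mul_eq_zero.mp hey).resolve_left ((map_ne_zero _).mpr hcoord)

variable {lam : ι → ℝ} {i₀ : ι} {a c : ℝ} {e : E}

theorem norm_one_sub_smul_pow_apply_le (hT : ∀ i, T (b i) = (lam i : 𝕜) • b i)
    (hzero : lam i₀ = 0) (ha : 0 ≤ a) (hlam : ∀ i ≠ i₀, lam i ∈ Set.Icc a c)
    (he₀ : e ≠ 0) (he : T e = 0) (δ : 𝕜) {y : E} (hey : ⟪e, y⟫_𝕜 = 0) (t : ℕ) :
    ‖((1 - δ • T) ^ t) y‖ ≤ max ‖1 - δ * (a : 𝕜)‖ ‖1 - δ * (c : 𝕜)‖ ^ t * ‖y‖ := by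
  refine norm_map_le_of_eigenbasis (fun i ↦ one_sub_smul_pow_apply (hT i) δ t) (by positivity)
    fun i ↦ ?_
  rw [norm_pow]
  by_cases hi : i = i₀
  · subst hi
    rcases ha.eq_or_lt with rfl | ha
    · left
      gcongr
      simp [hzero]
    · right
      have hne (j : ι) (hj : j ≠ i) : (lam j : 𝕜) ≠ 0 :=
        RCLike.ofReal_ne_zero.mpr (ha.trans_le (hlam j hj).1).ne'
      exact inner_eigenvector_eq_zero_of_inner_ker_eq_zero hT hne he₀ he hey
  · left
    gcongr
    simpa only [RCLike.real_smul_eq_coe_mul, mul_comm] using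
      norm_sub_smul_le_max (1 : 𝕜) δ (hlam i hi)

theorem norm_one_sub_smul_pow_apply_sub_starProjection_le
    (hT : ∀ i, T (b i) = (lam i : 𝕜) • b i)
    (hzero : lam i₀ = 0) (ha : 0 ≤ a) (hlam : ∀ i ≠ i₀, lam i ∈ Set.Icc a c)
    (he₀ : e ≠ 0) (he : T e = 0) (δ : 𝕜) (x : E) (t : ℕ) :
    ‖((1 - δ • T) ^ t) x - (𝕜 ∙ e).starProjection x‖ ≤
      max ‖1 - δ * (a : 𝕜)‖ ‖1 - δ * (c : 𝕜)‖ ^ t * ‖x - (𝕜 ∙ e).starProjection x‖ := by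
  set p := (𝕜 ∙ e).starProjection x with hp
  have hfix : ((1 - δ • T) ^ t) p = p := by
    have hTp : T p = (0 : 𝕜) • p := by
      rw [hp, Submodule.starProjection_singleton, map_smul, he, smul_zero, zero_smul]
    simpa using one_sub_smul_pow_apply hTp δ t
  have horth : ⟪e, x - p⟫_𝕜 = 0 :=
    Submodule.inner_right_of_mem_orthogonal (Submodule.mem_span_singleton_self e)
      (Submodule.sub_starProjection_mem_orthogonal x)
  calc ‖((1 - δ • T) ^ t) x - p‖ = ‖((1 - δ • T) ^ t) (x - p)‖ := by rw [map_sub, hfix]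
    _ ≤ _ := norm_one_sub_smul_pow_apply_le hT hzero ha hlam he₀ he δ horth t

end Eigenbasis

section EuclideanSpace

variable {𝕜 ι : Type*} [RCLike 𝕜] [Fintype ι]

theorem starProjection_span_one_toLp (x : ι → 𝕜) :
    (𝕜 ∙ toLp 2 (fun _ : ι ↦ (1 : 𝕜))).starProjection (toLp 2 x) =
      toLp 2 fun _ ↦ (∑ j, x j) / Fintype.card ι := by
  ext i
  simp [Submodule.starProjection_singleton, EuclideanSpace.inner_toLp_toLp, dotProduct,
    EuclideanSpace.norm_sq_eq]

theorem exists_orthonormalBasis_eq_toLp [DecidableEq ι] {v : ι → ι → 𝕜}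
    (hv : ∀ i j, star (v i) ⬝ᵥ v j = if i = j then 1 else 0) :
    ∃ b : OrthonormalBasis ι 𝕜 (EuclideanSpace 𝕜 ι), ∀ i, b i = toLp 2 (v i) := by
  have hon : Orthonormal 𝕜 fun i ↦ toLp 2 (v i) :=
    orthonormal_iff_ite.mpr fun i j ↦ by
      rw [EuclideanSpace.inner_toLp_toLp, dotProduct_comm, hv]
  have hspan := hon.linearIndependent.span_eq_top_of_card_eq_finrank' (by simp)
  exact ⟨.mk hon hspan.ge, fun i ↦ by rw [OrthonormalBasis.coe_mk]⟩

end EuclideanSpace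

/-- If `L` is a real symmetric positive semidefinite `n × n` matrix with `L 𝟏 = 0`
whose eigenvalues (with multiplicity, in increasing order) are
`0 = λ₁ ≤ λ₂ ≤ … ≤ λₙ`, witnessed by an orthonormal family of eigenvectors `v`,
and `s = max {|1 - δλ₂|, |1 - δλₙ|}`, then for every `x₀` and every `t ≥ 0`, with
`μ = (𝟏ᵀ x₀) / n`, one has `‖(I - δL)^t x₀ - μ𝟏‖ ≤ s^t ‖x₀ - μ𝟏‖` (Euclidean norm). -/
theorem consensus_contraction_bound {n : ℕ} (hn : 2 ≤ n)
    (L : Matrix (Fin n) (Fin n) ℝ)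
    (hsym : L.IsSymm) (hpsd : L.PosSemidef)
    (hL1 : L.mulVec (fun _ => (1 : ℝ)) = 0)
    (lam : Fin n → ℝ) (hmono : Monotone lam)
    (hlam1 : lam ⟨0, by omega⟩ = 0)
    (v : Fin n → (Fin n → ℝ))
    (honb : ∀ i j, v i ⬝ᵥ v j = if i = j then (1 : ℝ) else 0)
    (heig : ∀ i, L.mulVec (v i) = lam i • v i)
    (δ : ℝ)
    (x₀ : Fin n → ℝ) (t : ℕ) :
    Real.sqrt (∑ i, ((((1 : Matrix (Fin n) (Fin n) ℝ) - δ • L) ^ t).mulVec x₀ i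
        - (∑ j, x₀ j) / n) ^ 2)
      ≤ (max |1 - δ * lam ⟨1, by omega⟩| |1 - δ * lam ⟨n - 1, by omega⟩|) ^ t
        * Real.sqrt (∑ i, (x₀ i - (∑ j, x₀ j) / n) ^ 2) := by
  obtain ⟨b, hb⟩ := exists_orthonormalBasis_eq_toLp (𝕜 := ℝ) (by simpa using honb)
  have hT (i : Fin n) : toLpLin 2 2 L (b i) = lam i • b i := by
    rw [hb, toLpLin_toLp, toLin'_apply, heig, toLp_smul]
  have hgap : 0 ≤ lam ⟨1, by omega⟩ := hlam1 ▸ hmono (Fin.mk_le_mk.mpr zero_le_one)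
  have hlam (i : Fin n) (hi : i ≠ ⟨0, by omega⟩) :
      lam i ∈ Set.Icc (lam ⟨1, by omega⟩) (lam ⟨n - 1, by omega⟩) := by
    have hpos : 1 ≤ (i : ℕ) := Nat.one_le_iff_ne_zero.mpr (Fin.val_ne_of_ne hi)
    exact ⟨hmono (Fin.le_def.mpr hpos), hmono (Fin.le_def.mpr (Nat.le_sub_one_of_lt i.isLt))⟩
  have hone : toLp 2 (fun _ : Fin n ↦ (1 : ℝ)) ≠ 0 := fun h ↦
    one_ne_zero (congrFun (congrArg ofLp h) ⟨0, by omega⟩)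
  have hker : toLpLin 2 2 L (toLp 2 fun _ ↦ (1 : ℝ)) = 0 := by
    rw [toLpLin_toLp, toLin'_apply, hL1, toLp_zero]
  have hstep : (1 - δ • toLpLin 2 2 L) ^ t = toLpLin 2 2 ((1 - δ • L) ^ t) := by
    rw [toLpLin_pow, map_sub, map_smul, toLpLin_one, Module.End.one_eq_id]
  have hbound := norm_one_sub_smul_pow_apply_sub_starProjection_le hT hlam1 hgap hlam hone hker δ
    (toLp 2 x₀) t
  rw [starProjection_span_one_toLp, hstep, toLpLin_toLp, toLin'_apply] at hbound
  simpa [EuclideanSpace.norm_eq] using hbound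
end

section
/- Let n ≥ 2, let L be an n×n real symmetric positive semidefinite matrix satisfying L·𝟏 = 0, with eigenvalues 0 = λ₁ ≤ λ₂ ≤ … ≤ λₙ, let δ ∈ ℝ, and set s = max{|1 − δλ₂|, |1 − δλₙ|}. Then for every x ∈ ℝⁿ, writing x' = (I − δL)x, one has x'ᵀ L x' ≤ s² · (xᵀ L x). -/
open Matrix

/-! In an orthonormal eigenbasis of `L` the quadratic form is `∑ i, λᵢ cᵢ²`, where `cᵢ` are the
coordinates of the state, and one consensus step multiplies `cᵢ` by `1 - δλᵢ`. The coordinate of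
`λ₁ = 0` does not contribute, and since `t ↦ |1 - δt|` is convex, the other factors are bounded by
the larger of its values at `λ₂` and `λₙ`. -/

section Diagonalization

variable {ι R : Type*} [Fintype ι] [DecidableEq ι] [CommRing R]

theorem of_mul_transpose_eq_one_of_orthonormal {v : ι → ι → R}
    (horth : ∀ i j, v i ⬝ᵥ v j = if i = j then 1 else 0) : of v * (of v)ᵀ = 1 := by
  ext i j
  exact (horth i j).trans one_apply.symm

theorem mulVec_dotProduct_mulVec_of_mul_transpose_eq_one {V : Matrix ι ι R}
    (hV : V * Vᵀ = 1) (x y : ι → R) : (V *ᵥ x) ⬝ᵥ (V *ᵥ y) = x ⬝ᵥ y := by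
  rw [dotProduct_mulVec, ← mulVec_transpose, mulVec_mulVec, mul_eq_one_comm.mp hV, one_mulVec]

theorem of_mul_eq_diagonal_mul_of_eigenvectors {A : Matrix ι ι R} {v : ι → ι → R} {μ : ι → R}
    (hv : of v * (of v)ᵀ = 1) (heig : ∀ i, A *ᵥ v i = μ i • v i) :
    of v * A = diagonal μ * of v := by
  have hcols : A * (of v)ᵀ = (of v)ᵀ * diagonal μ := by
    ext k i
    rw [mul_diagonal, mul_comm]
    exact congrFun (heig i) k
  calc of v * A = of v * (A * (of v)ᵀ) * of v := by
        rw [Matrix.mul_assoc, Matrix.mul_assoc, mul_eq_one_comm.mp hv, Matrix.mul_one]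
    _ = of v * (of v)ᵀ * diagonal μ * of v := by simp only [hcols, Matrix.mul_assoc]
    _ = diagonal μ * of v := by rw [hv, Matrix.one_mul]

theorem mulVec_mulVec_apply_of_mul_eq_diagonal_mul {V A : Matrix ι ι R} {μ : ι → R}
    (hA : V * A = diagonal μ * V) (x : ι → R) (i : ι) :
    (V *ᵥ (A *ᵥ x)) i = μ i * (V *ᵥ x) i := by
  rw [mulVec_mulVec, hA, ← mulVec_mulVec, mulVec_diagonal]

theorem dotProduct_mulVec_eq_sum_of_mul_eq_diagonal_mul {V A : Matrix ι ι R} {μ : ι → R}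
    (hV : V * Vᵀ = 1) (hA : V * A = diagonal μ * V) (x : ι → R) :
    x ⬝ᵥ (A *ᵥ x) = ∑ i, μ i * (V *ᵥ x) i ^ 2 := by
  rw [← mulVec_dotProduct_mulVec_of_mul_transpose_eq_one hV]
  refine Finset.sum_congr rfl fun i _ => ?_
  rw [mulVec_mulVec_apply_of_mul_eq_diagonal_mul hA]
  ring

theorem mul_one_sub_smul_eq_diagonal_mul {V A : Matrix ι ι R} {μ : ι → R}
    (hA : V * A = diagonal μ * V) (δ : R) :
    V * (1 - δ • A) = diagonal (fun i => 1 - δ * μ i) * V := by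
  rw [Matrix.mul_sub, Matrix.mul_one, Matrix.mul_smul, hA]
  ext i j
  simp only [Matrix.sub_apply, Matrix.smul_apply, diagonal_mul, smul_eq_mul]
  ring

end Diagonalization

theorem abs_sub_mul_le_max {R : Type*} [Ring R] [LinearOrder R] [IsOrderedRing R] {a b t : R}
    (hat : a ≤ t) (htb : t ≤ b) (c δ : R) : |c - δ * t| ≤ max |c - δ * a| |c - δ * b| := by
  rcases le_total 0 δ with hδ | hδ
  · rw [max_comm]
    exact abs_le_max_abs_abs (sub_le_sub_left (mul_le_mul_of_nonneg_left htb hδ) c)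
      (sub_le_sub_left (mul_le_mul_of_nonneg_left hat hδ) c)
  · exact abs_le_max_abs_abs (sub_le_sub_left (mul_le_mul_of_nonpos_left hat hδ) c)
      (sub_le_sub_left (mul_le_mul_of_nonpos_left htb hδ) c)

section Order

variable {ι R : Type*} [CommRing R] [LinearOrder R] [IsStrictOrderedRing R]

theorem dotProduct_mulVec_mulVec_le_of_mul_eq_diagonal_mul [Fintype ι] [DecidableEq ι]
    {V A B : Matrix ι ι R} {μ ν : ι → R} {s : R} (hV : V * Vᵀ = 1)
    (hA : V * A = diagonal μ * V) (hB : V * B = diagonal ν * V) (hμ : ∀ i, 0 ≤ μ i)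
    (hν : ∀ i, μ i ≠ 0 → |ν i| ≤ s) (x : ι → R) :
    (B *ᵥ x) ⬝ᵥ (A *ᵥ (B *ᵥ x)) ≤ s ^ 2 * (x ⬝ᵥ (A *ᵥ x)) := by
  have hterm (i : ι) : μ i * ν i ^ 2 ≤ μ i * s ^ 2 := by
    rcases eq_or_ne (μ i) 0 with hi | hi
    · simp [hi]
    · exact mul_le_mul_of_nonneg_left (sq_le_sq.mpr ((hν i hi).trans (le_abs_self s))) (hμ i)
  calc (B *ᵥ x) ⬝ᵥ (A *ᵥ (B *ᵥ x)) = ∑ i, μ i * ν i ^ 2 * (V *ᵥ x) i ^ 2 := by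
        simp only [dotProduct_mulVec_eq_sum_of_mul_eq_diagonal_mul hV hA,
          mulVec_mulVec_apply_of_mul_eq_diagonal_mul hB, mul_pow, mul_assoc]
    _ ≤ ∑ i, μ i * s ^ 2 * (V *ᵥ x) i ^ 2 :=
        Finset.sum_le_sum fun i _ => mul_le_mul_of_nonneg_right (hterm i) (sq_nonneg _)
    _ = s ^ 2 * (x ⬝ᵥ (A *ᵥ x)) := by
        rw [dotProduct_mulVec_eq_sum_of_mul_eq_diagonal_mul hV hA, Finset.mul_sum]
        exact Finset.sum_congr rfl fun i _ => by ring

theorem disagreement_one_step_bound_general {m : ℕ} (L : Matrix (Fin (m + 2)) (Fin (m + 2)) R)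
    (lam : Fin (m + 2) → R) (hmono : Monotone lam) (hlam0 : lam 0 = 0)
    (v : Fin (m + 2) → Fin (m + 2) → R) (honb : ∀ i j, v i ⬝ᵥ v j = if i = j then 1 else 0)
    (heig : ∀ i, L *ᵥ v i = lam i • v i) (δ : R) (x : Fin (m + 2) → R) :
    ((1 - δ • L) *ᵥ x) ⬝ᵥ (L *ᵥ ((1 - δ • L) *ᵥ x)) ≤
      max |1 - δ * lam 1| |1 - δ * lam (Fin.last (m + 1))| ^ 2 * (x ⬝ᵥ (L *ᵥ x)) := by
  have hV : of v * (of v)ᵀ = 1 := of_mul_transpose_eq_one_of_orthonormal honb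
  have hL : of v * L = diagonal lam * of v := of_mul_eq_diagonal_mul_of_eigenvectors hV heig
  have hnonneg (i : Fin (m + 2)) : 0 ≤ lam i := hlam0.symm.le.trans (hmono (Fin.zero_le i))
  refine dotProduct_mulVec_mulVec_le_of_mul_eq_diagonal_mul hV hL
    (mul_one_sub_smul_eq_diagonal_mul hL δ) hnonneg (fun i hi => ?_) x
  have hi_ne : i ≠ 0 := fun h0 => hi (h0 ▸ hlam0)
  exact abs_sub_mul_le_max (hmono (Fin.one_le_of_ne_zero hi_ne)) (hmono (Fin.le_last i)) 1 δ

end Order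

/-- If `L` is a real symmetric positive semidefinite `n × n` matrix with `L 𝟏 = 0`
whose eigenvalues (with multiplicity, in increasing order) are
`0 = λ₁ ≤ λ₂ ≤ … ≤ λₙ`, witnessed by an orthonormal family of eigenvectors `v`,
and `s = max {|1 - δλ₂|, |1 - δλₙ|}`, then for every `x`, writing
`x' = (I - δL) x`, one has `x'ᵀ L x' ≤ s² · (xᵀ L x)`. -/
theorem disagreement_one_step_bound {n : ℕ} (hn : 2 ≤ n)
    (L : Matrix (Fin n) (Fin n) ℝ)
    (hsym : L.IsSymm) (hpsd : L.PosSemidef)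
    (hL1 : L.mulVec (fun _ => (1 : ℝ)) = 0)
    (lam : Fin n → ℝ) (hmono : Monotone lam)
    (hlam1 : lam ⟨0, by omega⟩ = 0)
    (v : Fin n → (Fin n → ℝ))
    (honb : ∀ i j, v i ⬝ᵥ v j = if i = j then (1 : ℝ) else 0)
    (heig : ∀ i, L.mulVec (v i) = lam i • v i)
    (δ : ℝ) (x : Fin n → ℝ) :
    (((1 : Matrix (Fin n) (Fin n) ℝ) - δ • L).mulVec x) ⬝ᵥ
        L.mulVec (((1 : Matrix (Fin n) (Fin n) ℝ) - δ • L).mulVec x)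
      ≤ (max |1 - δ * lam ⟨1, by omega⟩| |1 - δ * lam ⟨n - 1, by omega⟩|) ^ 2
        * (x ⬝ᵥ L.mulVec x) := by
  obtain ⟨m, rfl⟩ := Nat.exists_eq_add_of_le' hn
  exact disagreement_one_step_bound_general L lam hmono hlam1 v honb heig δ x
end

section
/- Let n ≥ 2, let L be an n×n real symmetric positive semidefinite matrix satisfying L·𝟏 = 0, with eigenvalues 0 = λ₁ ≤ λ₂ ≤ … ≤ λₙ, let δ ∈ ℝ, and set s = max{|1 − δλ₂|, |1 − δλₙ|}. Then for every x₀ ∈ ℝⁿ and every t ≥ 0, the iterate x(t) = (I − δL)ᵗ x₀ satisfies x(t)ᵀ L x(t) ≤ s²ᵗ · (x₀ᵀ L x₀). -/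
open Matrix

/-!
In an orthonormal basis of eigenvectors `vᵢ` of `L`, the form `xᵀ L x` is the sum of the modal
energies `λᵢ ⟨vᵢ, x⟩²`, and `t` steps of the iteration multiply the `i`-th coordinate by
`(1 - δλᵢ)ᵗ`. Modes with `λᵢ = 0` carry no energy; the other `λᵢ` lie in an interval `[a, b]`, such
as `[λ₂, λₙ]`, where the convex function `λ ↦ |1 - δλ|` is at most its maximum over the endpoints.
-/

section LeftEigenvector

variable {ι R : Type*} [Fintype ι] [CommRing R] {L : Matrix ι ι R} {u : ι → R} {c : R}

theorem dotProduct_mulVec_of_vecMul_eq_smul (hu : u ᵥ* L = c • u) (x : ι → R) :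
    u ⬝ᵥ L *ᵥ x = c * (u ⬝ᵥ x) := by
  rw [dotProduct_mulVec, hu, smul_dotProduct, smul_eq_mul]

theorem vecMul_eq_smul_of_isSymm (hL : L.IsSymm) (hu : L *ᵥ u = c • u) :
    u ᵥ* L = c • u := by
  rw [← mulVec_transpose, hL.eq, hu]

variable [DecidableEq ι]

theorem vecMul_one_sub_smul_of_vecMul_eq_smul (hu : u ᵥ* L = c • u) (δ : R) :
    u ᵥ* (1 - δ • L) = (1 - δ * c) • u := by
  rw [vecMul_sub, vecMul_one, vecMul_smul, hu, smul_smul, sub_smul, one_smul]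

theorem vecMul_pow_of_vecMul_eq_smul (hu : u ᵥ* L = c • u) (k : ℕ) :
    u ᵥ* L ^ k = c ^ k • u := by
  induction k with
  | zero => simp
  | succ k ih => rw [pow_succ, ← vecMul_vecMul, ih, smul_vecMul, hu, smul_smul, pow_succ]

end LeftEigenvector

section OrthonormalEigenvectors

variable {ι R : Type*} [Fintype ι] [DecidableEq ι] [CommRing R]
  {L A : Matrix ι ι R} {v : ι → ι → R} {lam c : ι → R}

theorem dotProduct_eq_sum_mul_of_orthonormal
    (hv : ∀ i j, v i ⬝ᵥ v j = if i = j then 1 else 0) (x y : ι → R) :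
    x ⬝ᵥ y = ∑ i, (v i ⬝ᵥ x) * (v i ⬝ᵥ y) := by
  have rows_orthonormal : of v * (of v)ᵀ = 1 := by
    ext i j
    exact (hv i j).trans one_apply.symm
  have columns_orthonormal : (of v)ᵀ * of v = 1 := mul_eq_one_comm.mp rows_orthonormal
  calc x ⬝ᵥ y = x ⬝ᵥ ((of v)ᵀ * of v) *ᵥ y := by rw [columns_orthonormal, one_mulVec]
    _ = (of v *ᵥ x) ⬝ᵥ (of v *ᵥ y) := by
      rw [← mulVec_mulVec, dotProduct_mulVec, vecMul_transpose]
    _ = ∑ i, (v i ⬝ᵥ x) * (v i ⬝ᵥ y) := rfl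

theorem dotProduct_mulVec_eq_sum_mul_sq
    (hv : ∀ i j, v i ⬝ᵥ v j = if i = j then 1 else 0)
    (hL : ∀ i, v i ᵥ* L = lam i • v i) (x : ι → R) :
    x ⬝ᵥ L *ᵥ x = ∑ i, lam i * (v i ⬝ᵥ x) ^ 2 := by
  rw [dotProduct_eq_sum_mul_of_orthonormal hv]
  refine Finset.sum_congr rfl fun i _ ↦ ?_
  rw [dotProduct_mulVec_of_vecMul_eq_smul (hL i)]
  ring

theorem dotProduct_mulVec_mulVec_le_sq_mul [LinearOrder R] [IsStrictOrderedRing R]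
    (hv : ∀ i j, v i ⬝ᵥ v j = if i = j then 1 else 0)
    (hL : ∀ i, v i ᵥ* L = lam i • v i) (hA : ∀ i, v i ᵥ* A = c i • v i)
    (hlam : ∀ i, 0 ≤ lam i) {s : R} (hc : ∀ i, lam i ≠ 0 → |c i| ≤ s) (x : ι → R) :
    (A *ᵥ x) ⬝ᵥ L *ᵥ (A *ᵥ x) ≤ s ^ 2 * (x ⬝ᵥ L *ᵥ x) := by
  have mode_le (i : ι) :
      lam i * (c i * (v i ⬝ᵥ x)) ^ 2 ≤ s ^ 2 * (lam i * (v i ⬝ᵥ x) ^ 2) := by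
    obtain hi | hi := eq_or_ne (lam i) 0
    · simp [hi]
    have c_sq_le : c i ^ 2 ≤ s ^ 2 := sq_le_sq.mpr ((hc i hi).trans (le_abs_self s))
    calc lam i * (c i * (v i ⬝ᵥ x)) ^ 2 = c i ^ 2 * (lam i * (v i ⬝ᵥ x) ^ 2) := by ring
      _ ≤ s ^ 2 * (lam i * (v i ⬝ᵥ x) ^ 2) :=
        mul_le_mul_of_nonneg_right c_sq_le (mul_nonneg (hlam i) (sq_nonneg _))
  simp only [dotProduct_mulVec_eq_sum_mul_sq hv hL, Finset.mul_sum,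
    dotProduct_mulVec_of_vecMul_eq_smul (hA _)]
  exact Finset.sum_le_sum fun i _ ↦ mode_le i

end OrthonormalEigenvectors

theorem abs_one_sub_mul_le_max_of_mem_Icc {R : Type*} [CommRing R] [LinearOrder R]
    [IsStrictOrderedRing R] {a b x : R} (hx : x ∈ Set.Icc a b) (δ : R) :
    |1 - δ * x| ≤ max |1 - δ * a| |1 - δ * b| := by
  obtain hδ | hδ := le_total 0 δ
  · rw [max_comm]
    exact abs_le_max_abs_abs (sub_le_sub_left (mul_le_mul_of_nonneg_left hx.2 hδ) 1)
      (sub_le_sub_left (mul_le_mul_of_nonneg_left hx.1 hδ) 1)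
  · exact abs_le_max_abs_abs (sub_le_sub_left (mul_le_mul_of_nonpos_left hx.1 hδ) 1)
      (sub_le_sub_left (mul_le_mul_of_nonpos_left hx.2 hδ) 1)

theorem mem_Icc_one_last_of_monotone {α : Type*} [Preorder α] {n : ℕ} {f : Fin n → α}
    (hf : Monotone f) (hn : 2 ≤ n) {i : Fin n} (hi : i.val ≠ 0) :
    f i ∈ Set.Icc (f ⟨1, hn⟩) (f ⟨n - 1, Nat.sub_one_lt_of_lt hn⟩) := by
  have one_le : 1 ≤ i.val := Nat.one_le_iff_ne_zero.mpr hi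
  have le_last : i.val ≤ n - 1 := Nat.le_sub_one_of_lt i.isLt
  exact ⟨hf one_le, hf le_last⟩

theorem disagreement_iterate_bound_general {ι R : Type*} [Fintype ι] [DecidableEq ι]
    [CommRing R] [LinearOrder R] [IsStrictOrderedRing R]
    {L : Matrix ι ι R} (hsym : L.IsSymm) {v : ι → ι → R} {lam : ι → R}
    (honb : ∀ i j, v i ⬝ᵥ v j = if i = j then 1 else 0)
    (heig : ∀ i, L *ᵥ v i = lam i • v i)
    {a b : R} (ha : 0 ≤ a) (hlam : ∀ i, lam i ≠ 0 → lam i ∈ Set.Icc a b)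
    (δ : R) (x₀ : ι → R) (t : ℕ) :
    ((1 - δ • L) ^ t *ᵥ x₀) ⬝ᵥ L *ᵥ ((1 - δ • L) ^ t *ᵥ x₀)
      ≤ max |1 - δ * a| |1 - δ * b| ^ (2 * t) * (x₀ ⬝ᵥ L *ᵥ x₀) := by
  have left_eig (i : ι) : v i ᵥ* L = lam i • v i := vecMul_eq_smul_of_isSymm hsym (heig i)
  have iterate_eig (i : ι) : v i ᵥ* (1 - δ • L) ^ t = (1 - δ * lam i) ^ t • v i :=
    vecMul_pow_of_vecMul_eq_smul (vecMul_one_sub_smul_of_vecMul_eq_smul (left_eig i) δ) t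
  have lam_nonneg (i : ι) : 0 ≤ lam i := by
    obtain hi | hi := eq_or_ne (lam i) 0
    · exact hi.ge
    · exact ha.trans (hlam i hi).1
  have damping (i : ι) (hi : lam i ≠ 0) :
      |(1 - δ * lam i) ^ t| ≤ max |1 - δ * a| |1 - δ * b| ^ t := by
    rw [abs_pow]
    exact pow_le_pow_left₀ (abs_nonneg _) (abs_one_sub_mul_le_max_of_mem_Icc (hlam i hi) δ) t
  rw [pow_mul']
  exact dotProduct_mulVec_mulVec_le_sq_mul honb left_eig iterate_eig lam_nonneg damping x₀

/-- If `L` is a real symmetric positive semidefinite `n × n` matrix with `L 𝟏 = 0`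
whose eigenvalues (with multiplicity, in increasing order) are
`0 = λ₁ ≤ λ₂ ≤ … ≤ λₙ`, witnessed by an orthonormal family of eigenvectors `v`,
and `s = max {|1 - δλ₂|, |1 - δλₙ|}`, then for every `x₀` and every `t ≥ 0`, the
iterate `x(t) = (I - δL)^t x₀` satisfies `x(t)ᵀ L x(t) ≤ s^(2t) · (x₀ᵀ L x₀)`. -/
theorem disagreement_iterate_bound {n : ℕ} (hn : 2 ≤ n)
    (L : Matrix (Fin n) (Fin n) ℝ)
    (hsym : L.IsSymm) (hpsd : L.PosSemidef)
    (hL1 : L.mulVec (fun _ => (1 : ℝ)) = 0)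
    (lam : Fin n → ℝ) (hmono : Monotone lam)
    (hlam1 : lam ⟨0, by omega⟩ = 0)
    (v : Fin n → (Fin n → ℝ))
    (honb : ∀ i j, v i ⬝ᵥ v j = if i = j then (1 : ℝ) else 0)
    (heig : ∀ i, L.mulVec (v i) = lam i • v i)
    (δ : ℝ) (x₀ : Fin n → ℝ) (t : ℕ) :
    ((((1 : Matrix (Fin n) (Fin n) ℝ) - δ • L) ^ t).mulVec x₀) ⬝ᵥ
        L.mulVec ((((1 : Matrix (Fin n) (Fin n) ℝ) - δ • L) ^ t).mulVec x₀)
      ≤ (max |1 - δ * lam ⟨1, by omega⟩| |1 - δ * lam ⟨n - 1, by omega⟩|) ^ (2 * t)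
        * (x₀ ⬝ᵥ L.mulVec x₀) := by
  have lam_two_nonneg : 0 ≤ lam ⟨1, hn⟩ := hlam1 ▸ hmono (Nat.zero_le 1)
  have lam_mem_Icc (i : Fin n) (hi : lam i ≠ 0) := mem_Icc_one_last_of_monotone hmono hn
    fun h : i.val = 0 ↦ hi ((congrArg lam (Fin.ext h)).trans hlam1)
  exact disagreement_iterate_bound_general hsym honb heig lam_two_nonneg lam_mem_Icc δ x₀ t
end
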